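/- The numerator R(q) of the q-rational [r/s]_q equals the generating function ∑_{p} q^{|p|} over monotone lattice paths p on the snake graph G(r/s) from bottom-left to top-right, where |p| is the number of tiles of G(r/s) lying above p. -/

import Mathlib

open scoped Classical

def snakeWord (a : List ℕ) : List Bool :=
  (List.range a.length).flatMap fun i =>
    List.replicate
      (if i = 0 ∨ i = a.length - 1 then a.getD i 0 - 1 else a.getD i 0)
      (i % 2 == 1)

def tilePos (w : List Bool) (j : ℕ) : ℕ × ℕ :=
  ((w.take j).count false, (w.take j).count true)

def IsSnakePath (w : List Bool) (p : Fin (w.length + 3) → ℕ × ℕ) : Prop :=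
  p 0 = (0, 0) ∧
  p (Fin.last _) = ((tilePos w w.length).1 + 1, (tilePos w w.length).2 + 1) ∧
  ∀ i : Fin (w.length + 2), ∃ j ≤ w.length,
    (p i.succ = ((p i.castSucc).1 + 1, (p i.castSucc).2) ∧
      (p i.castSucc = tilePos w j ∨
       p i.castSucc = ((tilePos w j).1, (tilePos w j).2 + 1))) ∨
    (p i.succ = ((p i.castSucc).1, (p i.castSucc).2 + 1) ∧
      (p i.castSucc = tilePos w j ∨
       p i.castSucc = ((tilePos w j).1 + 1, (tilePos w j).2)))

/-- Tile `j` lies (weakly) above the path `p`: the horizontal step of `p` crossing the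
column of tile `j` is at height at most the height of tile `j`. -/
def TileAbove (w : List Bool) (p : Fin (w.length + 3) → ℕ × ℕ) (j : ℕ) : Prop :=
  ∃ (i : Fin (w.length + 2)) (y : ℕ), y ≤ (tilePos w j).2 ∧
    p i.castSucc = ((tilePos w j).1, y) ∧ p i.succ = ((tilePos w j).1 + 1, y)

/-- The number of tiles of the snake graph lying above the path `p`. -/
noncomputable def pathArea (w : List Bool) (p : Fin (w.length + 3) → ℕ × ℕ) : ℕ :=
  ((Finset.range (w.length + 1)).filter fun j => TileAbove w p j).card

/-- The Morier-Genoud–Ovsienko q-deformed continued fraction: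
`qCF v [a₁,a₂,…] = [a₁]_v + v^{a₁} / qCF v⁻¹ [a₂,…]`, so that
`qCF RatFunc.X [a₁,…,a₂ₘ]` is the q-rational `[r/s]_q`. -/
noncomputable def qCF : RatFunc ℚ → List ℕ → RatFunc ℚ
  | _, [] => 0
  | v, [a] => ∑ i ∈ Finset.range a, v ^ i
  | v, a :: b :: l => (∑ i ∈ Finset.range a, v ^ i) + v ^ a / qCF v⁻¹ (b :: l)

open Polynomial

/-- The corner of the tile at `t` met by a path: lower right if `s = true`, upper left
otherwise. -/
def tileCorner (s : Bool) (t : ℕ × ℕ) : ℕ × ℕ :=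
  if s then (t.1 + 1, t.2) else (t.1, t.2 + 1)

lemma tilePos_zero (w : List Bool) : tilePos w 0 = (0, 0) := by simp [tilePos]

lemma tilePos_add (w : List Bool) {j : ℕ} (hj : j ≤ w.length) :
    (tilePos w j).1 + (tilePos w j).2 = j := by
  simp [tilePos, List.count_false_add_count_true, hj]

lemma tilePos_succ (w : List Bool) {j : ℕ} (hj : j < w.length) :
    tilePos w (j + 1) =
      if w[j] then ((tilePos w j).1, (tilePos w j).2 + 1)
      else ((tilePos w j).1 + 1, (tilePos w j).2) := by
  simp only [tilePos, List.take_succ_eq_append_getElem hj, List.count_append]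
  cases w[j] <;> simp

/-- The corner choices which come from a path on the snake graph: order ideals of a fence. -/
def IsFenceIdeal (w : List Bool) (b : Fin (w.length + 1) → Bool) : Prop :=
  ∀ i : Fin w.length, b i.castSucc = w[i] → b i.succ = w[i]

/-- The path through the chosen corners. -/
def cornerPath (w : List Bool) (b : Fin (w.length + 1) → Bool) (i : Fin (w.length + 3)) : ℕ × ℕ :=
  if i.val = 0 then (0, 0)
  else if h : i.val - 1 < w.length + 1 then tileCorner (b ⟨i.val - 1, h⟩) (tilePos w (i.val - 1))
  else ((tilePos w w.length).1 + 1, (tilePos w w.length).2 + 1)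

lemma cornerPath_mid (w : List Bool) (b : Fin (w.length + 1) → Bool) (j : ℕ)
    (hj : j < w.length + 1) (h : j + 1 < w.length + 3) :
    cornerPath w b ⟨j + 1, h⟩ = tileCorner (b ⟨j, hj⟩) (tilePos w j) := by
  simp [cornerPath, hj]

lemma cornerPath_end (w : List Bool) (b : Fin (w.length + 1) → Bool)
    (h : w.length + 2 < w.length + 3) :
    cornerPath w b ⟨w.length + 2, h⟩ =
      ((tilePos w w.length).1 + 1, (tilePos w w.length).2 + 1) := by
  simp [cornerPath]

lemma isSnakePath_cornerPath (w : List Bool) (b : Fin (w.length + 1) → Bool)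
    (hb : IsFenceIdeal w b) : IsSnakePath w (cornerPath w b) := by
  refine ⟨by simp [cornerPath], cornerPath_end w b _, ?_⟩
  rintro ⟨i, hi⟩
  simp only [Fin.succ_mk, Fin.castSucc_mk]
  rcases i with _ | i
  · refine ⟨0, by omega, ?_⟩
    rw [cornerPath_mid w b 0 (by omega)]
    simp only [tileCorner, tilePos_zero, cornerPath]
    cases b ⟨0, by omega⟩ <;> simp
  · rw [cornerPath_mid w b i (by omega)]
    rcases Nat.lt_or_ge i w.length with h | h
    · rw [cornerPath_mid w b (i + 1) (by omega)]
      have hv := hb ⟨i, h⟩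
      simp only [Fin.succ_mk, Fin.castSucc_mk, Fin.getElem_fin] at hv
      have hs := tilePos_succ w h
      by_cases hc : b ⟨i, by omega⟩ = w[i]
      · refine ⟨i, h.le, ?_⟩
        have hv := hv hc
        rw [hc, hv, hs]
        cases w[i] <;> simp [tileCorner]
      · refine ⟨i + 1, h, ?_⟩
        have hc : b ⟨i, by omega⟩ = !w[i] := by
          revert hc; cases b ⟨i, by omega⟩ <;> cases w[i] <;> simp
        rw [hc, hs]
        cases w[i] <;> cases b ⟨i + 1, by omega⟩ <;> simp [tileCorner]
    · obtain rfl : i = w.length := by omega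
      rw [cornerPath_end]
      refine ⟨w.length, le_rfl, ?_⟩
      cases b ⟨w.length, by omega⟩ <;> simp [tileCorner]

section Path

variable {w : List Bool} {p : Fin (w.length + 3) → ℕ × ℕ}

lemma IsSnakePath.step (hp : IsSnakePath w p) (i : ℕ) (hi : i + 1 < w.length + 3) :
    p ⟨i + 1, hi⟩ = ((p ⟨i, by omega⟩).1 + 1, (p ⟨i, by omega⟩).2) ∨
      p ⟨i + 1, hi⟩ = ((p ⟨i, by omega⟩).1, (p ⟨i, by omega⟩).2 + 1) := by
  obtain ⟨j, -, h | h⟩ := hp.2.2 ⟨i, by omega⟩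
  · exact Or.inl h.1
  · exact Or.inr h.1

lemma IsSnakePath.add_eq (hp : IsSnakePath w p) (i : ℕ) (hi : i < w.length + 3) :
    (p ⟨i, hi⟩).1 + (p ⟨i, hi⟩).2 = i := by
  induction i with
  | zero => exact (by simpa using congrArg (fun t : ℕ × ℕ => t.1 + t.2) hp.1)
  | succ i ih =>
    have := ih (by omega)
    rcases hp.step i hi with h | h <;> rw [h] <;> dsimp only <;> omega

lemma IsSnakePath.mono (hp : IsSnakePath w p) {i k : ℕ} (hik : i ≤ k) (hk : k < w.length + 3) :
    (p ⟨i, by omega⟩).1 ≤ (p ⟨k, hk⟩).1 ∧ (p ⟨i, by omega⟩).2 ≤ (p ⟨k, hk⟩).2 := by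
  induction k, hik using Nat.le_induction with
  | base => exact ⟨le_rfl, le_rfl⟩
  | succ k hik ih =>
    have := ih (by omega)
    rcases hp.step k hk with h | h <;> rw [h] <;> dsimp only <;> omega

/-- From each point, a path either leaves the lower left corner of a tile, or reaches the upper
right corner of the previous one. -/
lemma IsSnakePath.step_cases (hp : IsSnakePath w p) (i : ℕ) (hi : i + 1 < w.length + 3) :
    (i ≤ w.length ∧ p ⟨i, by omega⟩ = tilePos w i ∧
      ∃ s, p ⟨i + 1, hi⟩ = tileCorner s (tilePos w i)) ∨
    (1 ≤ i ∧ ∃ s, p ⟨i, by omega⟩ = tileCorner s (tilePos w (i - 1)) ∧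
      p ⟨i + 1, hi⟩ = ((tilePos w (i - 1)).1 + 1, (tilePos w (i - 1)).2 + 1)) := by
  have hsum := hp.add_eq i (by omega)
  obtain ⟨j, hj, h⟩ := hp.2.2 ⟨i, by omega⟩
  simp only [Fin.succ_mk, Fin.castSucc_mk] at h
  have ht := tilePos_add w hj
  rcases h with ⟨h1, h2 | h2⟩ | ⟨h1, h2 | h2⟩
  · rw [h2] at hsum
    obtain rfl : j = i := by omega
    exact Or.inl ⟨hj, h2, true, by rw [h1, h2]; simp [tileCorner]⟩
  · rw [h2] at hsum
    dsimp only at hsum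
    obtain rfl : i = j + 1 := by omega
    exact Or.inr ⟨by omega, false, by rw [h2]; simp [tileCorner], by rw [h1, h2]; simp⟩
  · rw [h2] at hsum
    obtain rfl : j = i := by omega
    exact Or.inl ⟨hj, h2, false, by rw [h1, h2]; simp [tileCorner]⟩
  · rw [h2] at hsum
    dsimp only at hsum
    obtain rfl : i = j + 1 := by omega
    exact Or.inr ⟨by omega, true, by rw [h2]; simp [tileCorner], by rw [h1, h2]; simp⟩

lemma IsSnakePath.exists_corner (hp : IsSnakePath w p) (j : ℕ) (hj : j < w.length + 1) :
    ∃ s, p ⟨j + 1, by omega⟩ = tileCorner s (tilePos w j) := by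
  rcases hp.step_cases j (by omega) with ⟨-, -, h⟩ | ⟨h0, s, -, h⟩
  · exact h
  · obtain ⟨j, rfl⟩ := Nat.exists_eq_add_of_le' h0
    rw [h, Nat.add_sub_cancel, tilePos_succ w (by omega)]
    refine ⟨w[j], ?_⟩
    cases w[j] <;> simp [tileCorner]

lemma tileCorner_injective (t : ℕ × ℕ) : Function.Injective fun s => tileCorner s t := by
  intro s s' h
  cases s <;> cases s' <;> simp_all [tileCorner, Prod.ext_iff]

lemma IsSnakePath.exists_ideal (hp : IsSnakePath w p) :
    ∃ b, IsFenceIdeal w b ∧ cornerPath w b = p := by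
  choose b hb using fun j : Fin (w.length + 1) => hp.exists_corner j.1 j.2
  refine ⟨b, ?_, ?_⟩
  · rintro ⟨i, hi⟩ h
    simp only [Fin.succ_mk, Fin.castSucc_mk, Fin.getElem_fin] at h ⊢
    have h1 := hb ⟨i, by omega⟩
    have h2 := hb ⟨i + 1, by omega⟩
    have hs := tilePos_succ w hi
    dsimp only at h1 h2
    rw [h] at h1
    rcases hp.step_cases (i + 1) (by omega) with ⟨-, h3, -⟩ | ⟨-, s, -, h3⟩
    · rw [h1, hs] at h3
      revert h3
      cases w[i] <;> simp [tileCorner]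
    · rw [Nat.add_sub_cancel, h2, hs] at h3
      revert h3
      cases w[i] <;> cases b ⟨i + 1, by omega⟩ <;> simp [tileCorner]
  · funext ⟨i, hi⟩
    rcases i with _ | i
    · exact hp.1.symm
    · rcases Nat.lt_or_ge i (w.length + 1) with h | h
      · rw [cornerPath_mid w b i h, ← hb ⟨i, h⟩]
      · obtain rfl : i = w.length + 1 := by omega
        rw [cornerPath_end]
        exact hp.2.1.symm

lemma IsSnakePath.tileAbove_iff (hp : IsSnakePath w p) (j : ℕ) (hj : j < w.length + 1) :
    TileAbove w p j ↔ p ⟨j + 1, by omega⟩ = tileCorner true (tilePos w j) := by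
  have ht := tilePos_add w (Nat.lt_succ_iff.1 hj)
  constructor
  · rintro ⟨⟨i, hi⟩, y, hy, h1, h2⟩
    simp only [Fin.succ_mk, Fin.castSucc_mk] at h1 h2
    have hsum := hp.add_eq i (by omega)
    rw [h1] at hsum
    dsimp only at hsum
    have hm := (hp.mono (show i + 1 ≤ j + 1 by omega) (by omega)).1
    obtain ⟨s, hs⟩ := hp.exists_corner j hj
    rw [h2, hs] at hm
    rw [hs]
    cases s
    · simp [tileCorner] at hm
    · rfl
  · intro h
    have hex : ∃ k, ∃ hk : k < w.length + 3, (tilePos w j).1 < (p ⟨k, hk⟩).1 :=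
      ⟨j + 1, by omega, by rw [h]; simp [tileCorner]⟩
    obtain ⟨k, ⟨hk, hk'⟩, hmin⟩ : ∃ k, (∃ hk : k < w.length + 3,
        (tilePos w j).1 < (p ⟨k, hk⟩).1) ∧ ∀ l < k, ¬ ∃ hk : l < w.length + 3,
        (tilePos w j).1 < (p ⟨l, hk⟩).1 :=
      ⟨Nat.find hex, Nat.find_spec hex, fun l hl => Nat.find_min hex hl⟩
    have hkj : k ≤ j + 1 := by
      by_contra! hlt
      exact hmin _ hlt ⟨by omega, by rw [h]; simp [tileCorner]⟩
    rcases k with _ | k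
    · have h0 : p ⟨0, hk⟩ = (0, 0) := hp.1
      rw [h0] at hk'
      exact absurd hk' (Nat.not_lt_zero _)
    · have hlt := hmin k (by omega)
      push Not at hlt
      have hlt := hlt (by omega)
      have hm := (hp.mono hkj (by omega)).2
      rw [h] at hm
      simp only [tileCorner, if_true] at hm
      rcases hp.step k hk with hs | hs
      · rw [hs] at hk' hm
        dsimp only at hk' hm
        refine ⟨⟨k, by omega⟩, (p ⟨k, by omega⟩).2, hm, ?_, ?_⟩
        · exact Prod.ext (by simp only [Fin.castSucc_mk]; omega) rfl
        · simp only [Fin.succ_mk, hs]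
          exact Prod.ext (by dsimp only; omega) rfl
      · rw [hs] at hk'
        dsimp only at hk'
        omega

end Path

lemma X_pow_pathArea_cornerPath (w : List Bool) (b : Fin (w.length + 1) → Bool)
    (hb : IsFenceIdeal w b) :
    (X : ℚ[X]) ^ pathArea w (cornerPath w b) = ∏ i, if b i then X else 1 := by
  rw [pathArea, ← Finset.prod_const, Finset.prod_filter, Finset.prod_range]
  refine Finset.prod_congr rfl fun i _ => ?_
  have h : TileAbove w (cornerPath w b) i ↔ b i = true := by
    rw [(isSnakePath_cornerPath w b hb).tileAbove_iff i i.2, cornerPath_mid w b i i.2]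
    exact (tileCorner_injective (tilePos w i)).eq_iff
  simp only [h]

/-- The generating function of the fence ideals with prescribed first corner. -/
noncomputable def fenceSum (w : List Bool) (s : Bool) : ℚ[X] :=
  ∑ b : Fin (w.length + 1) → Bool,
    if IsFenceIdeal w b ∧ b 0 = s then ∏ i, (if b i then X else 1) else 0

lemma finsum_snakePath (w : List Bool) :
    ∑ᶠ p : {p : Fin (w.length + 3) → ℕ × ℕ // IsSnakePath w p}, (X : ℚ[X]) ^ pathArea w p.1 =
      fenceSum w true + fenceSum w false := by
  have hbij : Function.Bijective (fun b : {b // IsFenceIdeal w b} =>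
      (⟨cornerPath w b.1, isSnakePath_cornerPath w b.1 b.2⟩ : {p // IsSnakePath w p})) := by
    constructor
    · rintro ⟨b, hb⟩ ⟨b', hb'⟩ h
      have h := congrArg Subtype.val h
      dsimp only at h
      refine Subtype.ext (funext fun i => tileCorner_injective (tilePos w i) ?_)
      have := congrFun h ⟨i + 1, by omega⟩
      rwa [cornerPath_mid w b i i.2, cornerPath_mid w b' i i.2] at this
    · rintro ⟨p, hp⟩
      obtain ⟨b, hb, rfl⟩ := hp.exists_ideal
      exact ⟨⟨b, hb⟩, rfl⟩
  rw [← finsum_eq_of_bijective _ hbij (fun b => (X_pow_pathArea_cornerPath w b.1 b.2).symm),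
    finsum_eq_sum_of_fintype, fenceSum, fenceSum, ← Finset.sum_add_distrib,
    ← Finset.sum_subtype (Finset.univ.filter (IsFenceIdeal w)) (by simp)
      (fun b => ∏ i, if b i then (X : ℚ[X]) else 1), Finset.sum_filter]
  refine Finset.sum_congr rfl fun b _ => ?_
  cases hb : b 0 <;> simp

lemma fenceSum_nil (s : Bool) : fenceSum [] s = if s then X else 1 := by
  have h : ∀ b : Fin 1 → Bool, IsFenceIdeal [] b := fun b i => i.elim0
  refine ((Equiv.funUnique (Fin 1) Bool).symm.sum_comp _).symm.trans ?_
  cases s <;> simp [h]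

lemma isFenceIdeal_cons (c : Bool) (w : List Bool) (s : Bool) (b : Fin (w.length + 1) → Bool) :
    IsFenceIdeal (c :: w) (Fin.cons s b : Fin (w.length + 1 + 1) → Bool) ↔
      (s = c → b 0 = c) ∧ IsFenceIdeal w b := by
  unfold IsFenceIdeal
  simp only [List.length_cons]
  rw [Fin.forall_fin_succ]
  rfl

lemma fenceSum_cons (c : Bool) (w : List Bool) (s : Bool) :
    fenceSum (c :: w) s = (if s then X else 1) *
      if s = c then fenceSum w c else fenceSum w true + fenceSum w false := by
  have h : fenceSum (c :: w) s = ∑ b : Fin (w.length + 1) → Bool,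
      if (s = c → b 0 = c) ∧ IsFenceIdeal w b then
        (if s then X else 1) * ∏ i, (if b i then X else 1) else 0 := by
    refine ((Fin.consEquiv fun _ : Fin (w.length + 1 + 1) => Bool).sum_comp _).symm.trans ?_
    rw [Fintype.sum_prod_type, Finset.sum_eq_single s]
    · refine Finset.sum_congr rfl fun b _ => ?_
      exact if_congr ((and_iff_left rfl).trans (isFenceIdeal_cons c w s b))
        (Fin.prod_univ_succ _) rfl
    · intro s' _ hs
      refine Finset.sum_eq_zero fun b _ => if_neg fun hb => hs hb.2
    · simp
  rw [h]
  split_ifs with hs hc hc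
  all_goals
    simp only [fenceSum, ← Finset.sum_add_distrib, Finset.mul_sum]
    refine Finset.sum_congr rfl fun b _ => ?_
    by_cases hi : IsFenceIdeal w b <;> cases hb : b 0 <;> simp [hi, hc]

/-- The action on column vectors of the `q`-deformed matrices `R_q` (for `false`) and `L_q`
(for `true`). -/
noncomputable def fenceStep (c : Bool) (v : ℚ[X] × ℚ[X]) : ℚ[X] × ℚ[X] :=
  if c then (X * v.1, X * v.1 + v.2) else (X * v.1 + v.2, v.2)

lemma fenceSum_eq_foldr (w : List Bool) :
    fenceSum w true = X * (w.foldr fenceStep (1, 1)).1 ∧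
      fenceSum w false = (w.foldr fenceStep (1, 1)).2 := by
  induction w with
  | nil => simp [fenceSum_nil]
  | cons c w ih => cases c <;> simp [fenceSum_cons, ih.1, ih.2, fenceStep]

lemma foldr_fenceStep_mul (c : ℚ[X]) (v : ℚ[X] × ℚ[X]) (w : List Bool) :
    w.foldr fenceStep (c * v.1, c * v.2) =
      (c * (w.foldr fenceStep v).1, c * (w.foldr fenceStep v).2) := by
  induction w with
  | nil => rfl
  | cons d w ih =>
    rw [List.foldr_cons, List.foldr_cons, ih]
    cases d <;> simp only [fenceStep, if_true, Bool.false_eq_true, if_false] <;>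
      ext1 <;> dsimp only <;> ring

lemma natDegree_X_mul_add {A B : ℚ[X]} (hA : A.Monic) (h : B.natDegree ≤ A.natDegree) :
    (X * A + B).Monic ∧ (X * A + B).natDegree = A.natDegree + 1 := by
  have hd : (X * A).natDegree = A.natDegree + 1 := natDegree_X_mul hA.ne_zero
  have hlt : B.natDegree < (X * A).natDegree := by omega
  exact ⟨(monic_X.mul hA).add_of_left (degree_lt_degree hlt),
    (natDegree_add_eq_left_of_natDegree_lt hlt).trans hd⟩

lemma foldr_fenceStep_monic (w : List Bool) :
    (w.foldr fenceStep (1, 1)).1.Monic ∧ (w.foldr fenceStep (1, 1)).2.Monic ∧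
      (w.foldr fenceStep (1, 1)).2.natDegree ≤ (w.foldr fenceStep (1, 1)).1.natDegree := by
  induction w with
  | nil => simp
  | cons c w ih =>
    rw [List.foldr_cons]
    obtain ⟨hA, hB, hd⟩ := ih
    obtain ⟨hm, hn⟩ := natDegree_X_mul_add hA hd
    cases c
    · exact ⟨hm, hB, by simp only [fenceStep, Bool.false_eq_true, if_false]; omega⟩
    · refine ⟨monic_X.mul hA, hm, ?_⟩
      simp only [fenceStep, if_true]
      rw [hn, natDegree_X_mul hA.ne_zero]

lemma foldr_fenceStep_isCoprime (w : List Bool) :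
    IsCoprime (w.foldr fenceStep (1, 1)).1 (w.foldr fenceStep (1, 1)).2 ∧
      IsCoprime X (w.foldr fenceStep (1, 1)).2 := by
  induction w with
  | nil => exact ⟨isCoprime_one_left, isCoprime_one_right⟩
  | cons c w ih =>
    rw [List.foldr_cons]
    obtain ⟨h, hX⟩ := ih
    have hm := hX.mul_left h
    cases c
    · exact ⟨by simpa [fenceStep] using hm.add_mul_right_left 1, hX⟩
    · exact ⟨by simpa [fenceStep, add_comm] using hm.add_mul_left_right 1,
        by simpa [fenceStep, add_comm] using hX.add_mul_left_right (w.foldr fenceStep (1, 1)).1⟩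

/-- The word `R^{a₁} U^{a₂} R^{a₃} ⋯`. -/
def fullWord (a : List ℕ) : List Bool :=
  (List.range a.length).flatMap fun i => List.replicate (a.getD i 0) (i % 2 == 1)

lemma fullWord_cons_cons (x y : ℕ) (l : List ℕ) :
    fullWord (x :: y :: l) =
      List.replicate x false ++ (List.replicate y true ++ fullWord l) := by
  simp [fullWord, List.range_succ_eq_map, List.flatMap_map, Nat.add_assoc]

lemma cons_snakeWord_append (a : List ℕ) (n : ℕ) (hlen : a.length = 2 * n + 2)
    (hpos : ∀ x ∈ a, 1 ≤ x) : false :: (snakeWord a ++ [true]) = fullWord a := by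
  have hp : ∀ i < a.length, 1 ≤ a.getD i 0 := fun i hi => by
    rw [List.getD_eq_getElem _ _ hi]
    exact hpos _ (List.getElem_mem hi)
  obtain ⟨k, hk⟩ := Nat.exists_eq_add_of_le' (hp 0 (by omega))
  obtain ⟨l, hl⟩ := Nat.exists_eq_add_of_le' (hp (2 * n + 1) (by omega))
  have hr : List.range (2 * n + 2) = 0 :: ((List.range (2 * n)).map Nat.succ ++ [2 * n + 1]) := by
    rw [List.range_succ, List.range_succ_eq_map, List.cons_append]
  have hmid : ∀ f g : ℕ → List Bool, (∀ i < 2 * n, f (i + 1) = g (i + 1)) →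
      ((List.range (2 * n)).map Nat.succ).flatMap f =
        ((List.range (2 * n)).map Nat.succ).flatMap g := by
    intro f g h
    simp only [List.flatMap_map]
    exact List.flatMap_congr fun i hi => h i (List.mem_range.1 hi)
  rw [snakeWord, fullWord, hlen, hr]
  simp only [List.flatMap_cons, List.flatMap_append, List.flatMap_nil, List.append_nil]
  rw [hmid _ (fun i => List.replicate (a.getD i 0) (i % 2 == 1))
    (fun i hi => by rw [if_neg (by omega)])]
  have h1 : (2 * n + 1) % 2 = 1 := by omega
  rw [if_pos (Or.inl trivial), if_pos (Or.inr (by omega)), h1, hk, hl, Nat.add_sub_cancel,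
    Nat.add_sub_cancel, List.replicate_succ, List.replicate_succ']
  simp

lemma foldr_replicate_true (n : ℕ) (v : ℚ[X] × ℚ[X]) :
    (List.replicate n true).foldr fenceStep v =
      (X ^ n * v.1, X * (∑ i ∈ Finset.range n, X ^ i) * v.1 + v.2) := by
  induction n with
  | zero => simp
  | succ n ih =>
    rw [List.replicate_succ, List.foldr_cons, ih, Finset.sum_range_succ]
    simp only [fenceStep, if_true]
    ext1 <;> dsimp only <;> ring

lemma foldr_replicate_false (n : ℕ) (v : ℚ[X] × ℚ[X]) :
    (List.replicate n false).foldr fenceStep v =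
      (X ^ n * v.1 + (∑ i ∈ Finset.range n, X ^ i) * v.2, v.2) := by
  induction n with
  | zero => simp
  | succ n ih =>
    rw [List.replicate_succ, List.foldr_cons, ih, geom_sum_succ]
    simp only [fenceStep, Bool.false_eq_true, if_false]
    ext1 <;> dsimp only
    ring

lemma geom_sum_inv_eq_div {K : Type*} [Field K] {v : K} (hv : v ≠ 0) (n : ℕ) :
    ∑ i ∈ Finset.range n, v⁻¹ ^ i = v * (∑ i ∈ Finset.range n, v ^ i) / v ^ n := by
  induction n with
  | zero => simp
  | succ n ih =>
    rw [Finset.sum_range_succ, ih, geom_sum_succ, inv_pow]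
    field_simp
    ring

lemma qCF_cons (v : RatFunc ℚ) (x : ℕ) (l : List ℕ) :
    qCF v (x :: l) = (∑ i ∈ Finset.range x, v ^ i) + v ^ x / qCF v⁻¹ l := by
  cases l <;> simp [qCF]

lemma qCF_eq_fullWord (n : ℕ) (a : List ℕ) (hlen : a.length = 2 * n) (hpos : ∀ x ∈ a, 1 ≤ x) :
    qCF RatFunc.X a = algebraMap ℚ[X] (RatFunc ℚ) ((fullWord a).foldr fenceStep (1, 0)).1 /
        algebraMap ℚ[X] (RatFunc ℚ) ((fullWord a).foldr fenceStep (1, 0)).2 ∧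
      0 < ((fullWord a).foldr fenceStep (1, 0)).1.eval 1 ∧
      0 ≤ ((fullWord a).foldr fenceStep (1, 0)).2.eval 1 := by
  induction n generalizing a with
  | zero =>
    obtain rfl := List.length_eq_zero_iff.1 hlen
    simp [qCF, fullWord]
  | succ n ih =>
    match a, hlen, hpos with
    | x :: y :: l, hlen, hpos =>
      obtain ⟨h, hA, hB⟩ := ih l (by simp only [List.length_cons] at hlen; omega)
        fun z hz => hpos z (by simp [hz])
      have hy : 1 ≤ y := hpos y (by simp)
      rw [fullWord_cons_cons, List.foldr_append, List.foldr_append, foldr_replicate_true,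
        foldr_replicate_false, qCF_cons, qCF_cons, inv_inv, h]
      generalize (fullWord l).foldr fenceStep (1, 0) = v at hA hB ⊢
      obtain ⟨A, B⟩ := v
      dsimp only at hA hB ⊢
      have hy' : (0 : ℚ) < y := by exact_mod_cast hy
      have hS : 0 < (X * (∑ i ∈ Finset.range y, X ^ i) * A + B).eval 1 := by
        simp only [eval_add, eval_mul, eval_X, eval_finsetSum, eval_pow, one_pow,
          Finset.sum_const, Finset.card_range, nsmul_eq_mul, one_mul, mul_one]
        positivity
      refine ⟨?_, ?_, hS.le⟩
      · have hne : ∀ P : ℚ[X], 0 < P.eval 1 → algebraMap ℚ[X] (RatFunc ℚ) P ≠ 0 := by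
          intro P hP h0
          rw [map_eq_zero_iff _ (RatFunc.algebraMap_injective ℚ)] at h0
          simp [h0] at hP
        have hA' := hne A hA
        have hS' := hne _ hS
        have hX : (RatFunc.X : RatFunc ℚ) ≠ 0 := RatFunc.X_ne_zero
        rw [geom_sum_inv_eq_div hX]
        simp only [map_add, map_mul, map_pow, map_sum, RatFunc.algebraMap_X] at hS' ⊢
        generalize algebraMap ℚ[X] (RatFunc ℚ) A = A at *
        generalize algebraMap ℚ[X] (RatFunc ℚ) B = B at *
        have hq : RatFunc.X * (∑ i ∈ Finset.range y, RatFunc.X ^ i) / RatFunc.X ^ y +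
            (RatFunc.X : RatFunc ℚ)⁻¹ ^ y / (A / B) =
            (RatFunc.X * (∑ i ∈ Finset.range y, RatFunc.X ^ i) * A + B) /
              (RatFunc.X ^ y * A) := by
          rw [div_div_eq_mul_div, inv_pow]
          field_simp
        rw [hq, div_div_eq_mul_div, add_div, mul_div_cancel_right₀ _ hS', add_comm]
      · have := mul_nonneg (Nat.cast_nonneg x : (0 : ℚ) ≤ x) hS.le
        have hx : (∑ i ∈ Finset.range x, (X : ℚ[X]) ^ i).eval 1 = x := by simp [eval_finsetSum]
        rw [eval_add, eval_mul, eval_mul (p := ∑ i ∈ Finset.range x, (X : ℚ[X]) ^ i), hx,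
          eval_mul (p := X ^ y)]
        simp only [eval_pow, eval_X, one_pow, one_mul]
        linarith

lemma num_div_of_isCoprime {K : Type*} [Field K] {p q : K[X]} (hq : q.Monic)
    (h : IsCoprime p q) :
    (algebraMap K[X] (RatFunc K) p / algebraMap K[X] (RatFunc K) q).num = p := by
  have hg : gcd p q = 1 := by
    rw [← normalize_gcd]
    exact normalize_eq_one.2 (gcd_isUnit_iff_isRelPrime.2 h.isRelPrime)
  rw [RatFunc.num_div, hg]
  simp [hq.leadingCoeff]

/-- The numerator `R(q)` of the q-rational `[r/s]_q` (with
`r/s = [a₁,…,a₂ₘ]`) equals the generating function `∑_p q^{|p|}` over monotone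
lattice paths `p` on the snake graph `G(r/s)`, where `|p|` is the number of tiles
above `p`. -/
theorem num_qRational_eq_snake_path_generating_function
    (m : ℕ) (hm : 0 < m) (a : List ℕ) (hlen : a.length = 2 * m)
    (hpos : ∀ x ∈ a, 1 ≤ x) :
    (qCF RatFunc.X a).num =
      ∑ᶠ p : {p : Fin ((snakeWord a).length + 3) → ℕ × ℕ //
          IsSnakePath (snakeWord a) p},
        (Polynomial.X : Polynomial ℚ) ^ pathArea (snakeWord a) p.1 := by
  obtain ⟨n, rfl⟩ := Nat.exists_eq_add_of_le' hm
  obtain ⟨h, -, -⟩ := qCF_eq_fullWord (n + 1) a hlen hpos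
  have hX : algebraMap ℚ[X] (RatFunc ℚ) X ≠ 0 := by
    rw [RatFunc.algebraMap_X]
    exact RatFunc.X_ne_zero
  rw [← cons_snakeWord_append a n (by omega) hpos, ← List.cons_append, List.foldr_append,
    show [true].foldr fenceStep (1, 0) = (X * 1, X * 1) by simp [fenceStep],
    foldr_fenceStep_mul X (1, 1), map_mul, map_mul,
    mul_div_mul_left _ _ hX] at h
  rw [h, num_div_of_isCoprime (foldr_fenceStep_monic _).2.1 (foldr_fenceStep_isCoprime _).1,
    finsum_snakePath, (fenceSum_eq_foldr _).1, (fenceSum_eq_foldr _).2]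
  simp [fenceStep]
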